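/- For every 2×2 complex unitary matrix U there exist unique real numbers α₀, α₁, α₂, α₃ with α₀, α₂ ∈ [0, 2π), α₁ ∈ [0, π/2), α₃ ∈ [0, π), and α₁ = 0 whenever α₀ − α₂ is an integer multiple of π, such that U = B(α₁) · diag(e^{iα₀}, e^{iα₂}) · B(α₃). (This is the existence and uniqueness of the left-hand-side parameters in the Euler equation (E2) of the LOpp-calculus: any element of U(2) is a beam splitter, followed by a phase on each wire, followed by a beam splitter.) -/

import Mathlib

open Complex Real

noncomputable def bsMat (θ : ℝ) : Matrix (Fin 2) (Fin 2) ℂ :=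
  !![(Real.cos θ : ℂ), Complex.I * Real.sin θ;
     Complex.I * Real.sin θ, (Real.cos θ : ℂ)]

/-!
Every `bsMat θ` is the exponential of `iθX` with `X` the Pauli matrix, so this is the Cartan
decomposition of `U(2)` with respect to the circle of beam splitters.

*Existence.* A unitary `V` is a diagonal matrix times a beam splitter as soon as the entries `v₀`,
`v₁` of its first row satisfy `Re (v₀* v₁) = 0`. For `V = B(-a) U` this quantity at `a = π / 2` is
the opposite of its value at `a = 0`, because the columns of `U` are orthogonal, so it vanishes for
some `a` in `[0, π / 2)`.

*Uniqueness.* If `B(θ) diag(p, q) = diag(p', q') B(s)`, then multiplying the entries within each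
column gives `sin θ cos θ p² = sin s cos s p' q' = sin θ cos θ q²`, hence `p² = q²` unless `θ` is a
multiple of `π / 2`.
-/

lemma bsMat_add (x y : ℝ) : bsMat (x + y) = bsMat x * bsMat y := by
  simp only [bsMat, Matrix.mul_fin_two, Real.cos_add, Real.sin_add, ofReal_sub, ofReal_add,
    ofReal_mul]
  congrm !![?_, ?_; ?_, ?_]
  · linear_combination (-Real.sin x * Real.sin y : ℂ) * I_sq
  · ring
  · ring
  · linear_combination (-Real.sin x * Real.sin y : ℂ) * I_sq

lemma bsMat_zero : bsMat 0 = 1 := by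
  simp [bsMat, Matrix.one_fin_two]

lemma bsMat_mul_bsMat_neg (x : ℝ) : bsMat x * bsMat (-x) = 1 := by
  rw [← bsMat_add, add_neg_cancel, bsMat_zero]

lemma bsMat_neg_mul_bsMat (x : ℝ) : bsMat (-x) * bsMat x = 1 := by
  rw [← bsMat_add, neg_add_cancel, bsMat_zero]

lemma star_bsMat (x : ℝ) : star (bsMat x) = bsMat (-x) := by
  ext i j
  fin_cases i <;> fin_cases j <;>
    simp [bsMat, Matrix.star_apply, ← Complex.cos_conj, ← Complex.sin_conj]

lemma bsMat_mem_unitaryGroup (x : ℝ) : bsMat x ∈ Matrix.unitaryGroup (Fin 2) ℂ := by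
  rw [Matrix.mem_unitaryGroup_iff, star_bsMat, bsMat_mul_bsMat_neg]

lemma continuous_bsMat : Continuous bsMat := by
  have hcos : Continuous fun θ : ℝ ↦ (Real.cos θ : ℂ) := by fun_prop
  have hsin : Continuous fun θ : ℝ ↦ I * (Real.sin θ : ℂ) := by fun_prop
  refine continuous_matrix fun i j ↦ ?_
  fin_cases i <;> fin_cases j
  exacts [hcos, hsin, hsin, hcos]

lemma mul_bsMat_apply_one (V : Matrix (Fin 2) (Fin 2) ℂ) (x : ℝ) (i : Fin 2) :
    (V * bsMat x) i 1 = Real.sin x * (I * V i 0) + Real.cos x * V i 1 := by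
  simp only [bsMat, Matrix.mul_apply, Fin.sum_univ_two, Matrix.of_apply, Matrix.cons_val]
  ring

lemma exists_bsMat_mul_diagonal_eq_diagonal_mul_bsMat {d : Fin 2 → ℂ} (hd : d 0 ^ 2 = d 1 ^ 2)
    (x : ℝ) : ∃ y, bsMat x * Matrix.diagonal d = Matrix.diagonal d * bsMat y := by
  rcases sq_eq_sq_iff_eq_or_eq_neg.1 hd with h | h
  · refine ⟨x, ?_⟩
    ext i j
    fin_cases i <;> fin_cases j <;> simp [bsMat, h, mul_comm]
  · refine ⟨-x, ?_⟩
    ext i j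
    fin_cases i <;> fin_cases j <;> simp [bsMat, h, mul_comm]

section Unitary

variable {n R : Type*} [Fintype n] [DecidableEq n] [CommRing R] [StarRing R]

lemma isDiag_of_blockTriangular_of_mem_unitaryGroup {α : Type*} [LinearOrder α] {b : n → α}
    {V : Matrix n n R} (hb : Function.Injective b) (h : V.BlockTriangular b)
    (hV : V ∈ Matrix.unitaryGroup n R) : V.IsDiag := by
  have hVV : V * star V = 1 := Matrix.mem_unitaryGroup_iff.1 hV
  have : Invertible V := invertibleOfRightInverse V _ hVV
  have h_star : (star V).BlockTriangular b := by
    rw [← Matrix.inv_eq_right_inv hVV]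
    exact Matrix.blockTriangular_inv_of_blockTriangular h
  intro i j hij
  rcases (hb.ne hij).lt_or_gt with hlt | hlt
  · exact star_eq_zero.1 (h_star hlt)
  · exact h hlt

lemma mem_unitary_of_diagonal_mem_unitaryGroup {d : n → R}
    (hd : Matrix.diagonal d ∈ Matrix.unitaryGroup n R) (i : n) : d i ∈ unitary R := by
  have h := congrFun₂ (Matrix.mem_unitaryGroup_iff.1 hd) i i
  rw [Unitary.mem_iff_self_mul_star]
  simpa [Matrix.star_eq_conjTranspose, Matrix.diagonal_conjTranspose] using h

lemma exists_eq_diagonal_circle_of_isDiag {V : Matrix n n ℂ} (hV : V ∈ Matrix.unitaryGroup n ℂ)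
    (h : V.IsDiag) : ∃ d : n → Circle, V = Matrix.diagonal (fun i ↦ (d i : ℂ)) := by
  rw [← h.diagonal_diag] at hV
  have h_norm (i : n) : ‖V.diag i‖ = 1 :=
    CStarRing.norm_of_mem_unitary (mem_unitary_of_diagonal_mem_unitaryGroup hV i)
  exact ⟨fun i ↦ ⟨V.diag i, mem_sphere_zero_iff_norm.2 (h_norm i)⟩, h.diagonal_diag.symm⟩

end Unitary

lemma exists_mem_Ico_eq_zero_of_eq_neg {f : ℝ → ℝ} {x y : ℝ} (hxy : x < y)
    (hf : ContinuousOn f (Set.Icc x y)) (h : f y = -f x) :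
    ∃ t ∈ Set.Ico x y, f t = 0 ∧ (f x = 0 → t = x) := by
  by_cases hx : f x = 0
  · exact ⟨x, Set.left_mem_Ico.2 hxy, hx, fun _ ↦ rfl⟩
  rw [← Set.uIcc_of_le hxy.le] at hf
  obtain ⟨t, ht, hft⟩ : (0 : ℝ) ∈ f '' Set.uIcc x y := intermediate_value_uIcc hf <| by
    rw [h, Set.mem_uIcc]
    rcases le_total (f x) 0 with hle | hle
    · exact .inl ⟨hle, neg_nonneg.2 hle⟩
    · exact .inr ⟨neg_nonpos.2 hle, hle⟩
  rw [Set.uIcc_of_le hxy.le] at ht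
  have hty : t ≠ y := fun e ↦ hx (by rw [← neg_eq_zero, ← h, ← e, hft])
  exact ⟨t, ⟨ht.1, ht.2.lt_of_ne hty⟩, hft, fun h0 ↦ (hx h0).elim⟩

lemma exists_sin_mul_add_cos_mul_eq_zero {z w : ℂ} (h : (star z * w).im = 0) :
    ∃ t ∈ Set.Ico 0 π, Real.sin t * z + Real.cos t * w = 0 := by
  by_cases hz : z = 0
  · exact ⟨π / 2, ⟨by positivity, by linarith [pi_pos]⟩, by simp [hz]⟩
  have hzz : star z * z = normSq z := (normSq_eq_conj_mul_self).symm
  have hzw : star z * w = (star z * w).re := Complex.ext rfl h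
  obtain ⟨t, ht, h0, -⟩ := exists_mem_Ico_eq_zero_of_eq_neg
    (f := fun t ↦ Real.sin t * normSq z + Real.cos t * (star z * w).re)
    pi_pos (by fun_prop) (by simp)
  refine ⟨t, ht, mul_left_cancel₀ (star_ne_zero.2 hz) ?_⟩
  calc star z * (Real.sin t * z + Real.cos t * w)
      = Real.sin t * (star z * z) + Real.cos t * (star z * w) := by ring
    _ = 0 := by
      rw [hzz, hzw]
      exact_mod_cast h0
    _ = star z * 0 := (mul_zero _).symm

lemma exists_eq_diagonal_mul_bsMat {V : Matrix (Fin 2) (Fin 2) ℂ}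
    (hV : V ∈ Matrix.unitaryGroup (Fin 2) ℂ) (h : (star (V 0 0) * V 0 1).re = 0) :
    ∃ d : Fin 2 → Circle, ∃ t ∈ Set.Ico 0 π,
      V = Matrix.diagonal (fun i ↦ (d i : ℂ)) * bsMat t := by
  obtain ⟨t, ht, h0⟩ : ∃ t ∈ Set.Ico 0 π, Real.sin t * (-I * V 0 0) + Real.cos t * V 0 1 = 0 :=
    exists_sin_mul_add_cos_mul_eq_zero (by simpa [mul_assoc] using h)
  have h_mem : V * bsMat (-t) ∈ Matrix.unitaryGroup (Fin 2) ℂ :=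
    mul_mem hV (bsMat_mem_unitaryGroup _)
  have h_zero : (V * bsMat (-t)) 0 1 = 0 := by
    rw [mul_bsMat_apply_one, ← h0, Real.sin_neg, Real.cos_neg]
    push_cast
    ring
  have h_lower : (V * bsMat (-t)).BlockTriangular OrderDual.toDual := by
    intro i j (hij : i < j)
    obtain ⟨rfl, rfl⟩ : i = 0 ∧ j = 1 := by omega
    exact h_zero
  obtain ⟨d, hd⟩ := exists_eq_diagonal_circle_of_isDiag h_mem
    (isDiag_of_blockTriangular_of_mem_unitaryGroup OrderDual.toDual.injective h_lower h_mem)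
  exact ⟨d, t, ht, by rw [← hd, mul_assoc, bsMat_neg_mul_bsMat, mul_one]⟩

lemma re_star_mul_diagonal_mul_bsMat (d : Fin 2 → ℂ) (t : ℝ) :
    (star ((Matrix.diagonal d * bsMat t) 0 0) * (Matrix.diagonal d * bsMat t) 0 1).re = 0 := by
  have h : star (d 0 * Real.cos t) * (d 0 * (I * Real.sin t))
      = (normSq (d 0) * Real.cos t * Real.sin t : ℝ) * I := by
    simp only [star_mul', star_def, conj_ofReal, ofReal_mul, normSq_eq_conj_mul_self]
    ring
  rw [Matrix.diagonal_mul, Matrix.diagonal_mul]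
  exact (congrArg re h).trans (by rw [re_ofReal_mul, I_re, mul_zero])

lemma exists_re_star_mul_bsMat_neg_mul_eq_zero {U : Matrix (Fin 2) (Fin 2) ℂ}
    (hU : U ∈ Matrix.unitaryGroup (Fin 2) ℂ) :
    ∃ a ∈ Set.Ico 0 (π / 2), (star ((bsMat (-a) * U) 0 0) * (bsMat (-a) * U) 0 1).re = 0 ∧
      ((star (U 0 0) * U 0 1).re = 0 → a = 0) := by
  set f : ℝ → ℝ := fun a ↦ (star ((bsMat (-a) * U) 0 0) * (bsMat (-a) * U) 0 1).re with hf
  have hf_cont : Continuous f := by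
    have hW : Continuous fun a ↦ bsMat (-a) * U :=
      (continuous_bsMat.comp continuous_neg).matrix_mul continuous_const
    exact continuous_re.comp ((hW.matrix_elem 0 0).star.mul (hW.matrix_elem 0 1))
  have hf_zero : f 0 = (star (U 0 0) * U 0 1).re := by simp [hf, bsMat_zero]
  have hf_pi_div_two : f (π / 2) = (star (U 1 0) * U 1 1).re := by
    simp [hf, bsMat, Matrix.mul_apply, Fin.sum_univ_two, add_comm]
  have h_orth : (star (U 0 0) * U 0 1).re + (star (U 1 0) * U 1 1).re = 0 := by
    have h := congrArg Complex.re (congrFun₂ (Matrix.mem_unitaryGroup_iff'.1 hU) 0 1)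
    simpa [Matrix.mul_apply, Fin.sum_univ_two] using h
  have h_root := exists_mem_Ico_eq_zero_of_eq_neg pi_div_two_pos hf_cont.continuousOn (by linarith)
  rwa [hf_zero] at h_root

theorem exists_eq_bsMat_mul_diagonal_mul_bsMat {U : Matrix (Fin 2) (Fin 2) ℂ}
    (hU : U ∈ Matrix.unitaryGroup (Fin 2) ℂ) :
    ∃ a ∈ Set.Ico 0 (π / 2), ∃ d : Fin 2 → Circle, ∃ t ∈ Set.Ico 0 π,
      ((d 0 : ℂ) ^ 2 = (d 1 : ℂ) ^ 2 → a = 0) ∧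
        U = bsMat a * Matrix.diagonal (fun i ↦ (d i : ℂ)) * bsMat t := by
  obtain ⟨a, ha, h_re, ha_zero⟩ := exists_re_star_mul_bsMat_neg_mul_eq_zero hU
  obtain ⟨d, t, ht, hdt⟩ :=
    exists_eq_diagonal_mul_bsMat (mul_mem (bsMat_mem_unitaryGroup (-a)) hU) h_re
  have hU_eq : U = bsMat a * Matrix.diagonal (fun i ↦ (d i : ℂ)) * bsMat t := by
    rw [mul_assoc, ← hdt, ← mul_assoc, bsMat_mul_bsMat_neg, one_mul]
  refine ⟨a, ha, d, t, ht, fun hd ↦ ha_zero ?_, hU_eq⟩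
  obtain ⟨s, hs⟩ := exists_bsMat_mul_diagonal_eq_diagonal_mul_bsMat (d := fun i ↦ (d i : ℂ)) hd a
  rw [hU_eq, hs, mul_assoc, ← bsMat_add]
  exact re_star_mul_diagonal_mul_bsMat _ _

section Uniqueness

variable {d d' : Fin 2 → ℂ} {a a' t t' θ s : ℝ}

lemma sq_eq_sq_of_bsMat_mul_diagonal_eq (hsin : Real.sin θ ≠ 0) (hcos : Real.cos θ ≠ 0)
    (h : bsMat θ * Matrix.diagonal d = Matrix.diagonal d' * bsMat s) : d 0 ^ 2 = d 1 ^ 2 := by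
  have h_entry (i j : Fin 2) : bsMat θ i j * d j = d' i * bsMat s i j := by
    rw [← Matrix.mul_diagonal, h, Matrix.diagonal_mul]
  have h00 : Real.cos θ * d 0 = d' 0 * Real.cos s := h_entry 0 0
  have h01 : I * Real.sin θ * d 1 = d' 0 * (I * Real.sin s) := h_entry 0 1
  have h10 : I * Real.sin θ * d 0 = d' 1 * (I * Real.sin s) := h_entry 1 0
  have h11 : Real.cos θ * d 1 = d' 1 * Real.cos s := h_entry 1 1
  have h_coeff : I * Real.sin θ * Real.cos θ ≠ 0 :=
    mul_ne_zero (mul_ne_zero I_ne_zero (ofReal_ne_zero.2 hsin)) (ofReal_ne_zero.2 hcos)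
  refine mul_left_cancel₀ h_coeff ?_
  calc I * Real.sin θ * Real.cos θ * d 0 ^ 2
      = (Real.cos θ * d 0) * (I * Real.sin θ * d 0) := by ring
    _ = (I * Real.sin θ * d 1) * (Real.cos θ * d 1) := by
      rw [h00, h10, h01, h11]
      ring
    _ = I * Real.sin θ * Real.cos θ * d 1 ^ 2 := by ring

lemma bsMat_sub_mul_diagonal_eq
    (h : bsMat a * Matrix.diagonal d * bsMat t = bsMat a' * Matrix.diagonal d' * bsMat t') :
    bsMat (a - a') * Matrix.diagonal d = Matrix.diagonal d' * bsMat (t' - t) :=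
  calc bsMat (a - a') * Matrix.diagonal d
      = bsMat (-a') * (bsMat a * Matrix.diagonal d * bsMat t) * bsMat (-t) := by
        rw [sub_eq_neg_add, bsMat_add]
        simp only [mul_assoc, bsMat_mul_bsMat_neg, mul_one]
    _ = Matrix.diagonal d' * bsMat (t' - t) := by
        rw [h, sub_eq_add_neg, bsMat_add]
        simp only [← mul_assoc, bsMat_neg_mul_bsMat, one_mul]

lemma sq_eq_sq_of_bsMat_mul_diagonal_mul_bsMat_eq (h_ne : a ≠ a') (h_lt : |a - a'| < π / 2)
    (h : bsMat a * Matrix.diagonal d * bsMat t = bsMat a' * Matrix.diagonal d' * bsMat t') :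
    d 0 ^ 2 = d 1 ^ 2 := by
  obtain ⟨hl, hr⟩ := abs_lt.1 h_lt
  have hcos : Real.cos (a - a') ≠ 0 := (Real.cos_pos_of_mem_Ioo ⟨hl, hr⟩).ne'
  have hsin : Real.sin (a - a') ≠ 0 := fun h0 ↦ h_ne <| sub_eq_zero.1 <|
    (Real.sin_eq_zero_iff_of_lt_of_lt (by linarith [pi_pos]) (by linarith [pi_pos])).1 h0
  exact sq_eq_sq_of_bsMat_mul_diagonal_eq hsin hcos (bsMat_sub_mul_diagonal_eq h)

lemma eq_and_eq_of_diagonal_eq_diagonal_mul_bsMat (hd' : d' 0 ≠ 0) (hs : |s| < π)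
    (h : Matrix.diagonal d = Matrix.diagonal d' * bsMat s) : d = d' ∧ s = 0 := by
  have h01 : d' 0 * (I * Real.sin s) = 0 :=
    calc d' 0 * (I * Real.sin s) = (Matrix.diagonal d' * bsMat s) 0 1 :=
          (Matrix.diagonal_mul d' (bsMat s) 0 1).symm
      _ = 0 := by rw [← h, Matrix.diagonal_apply_ne _ (by decide)]
  have hsin : Real.sin s = 0 := by
    simpa only [mul_eq_zero, hd', I_ne_zero, false_or, ofReal_eq_zero] using h01
  obtain ⟨hl, hr⟩ := abs_lt.1 hs
  obtain rfl : s = 0 := (Real.sin_eq_zero_iff_of_lt_of_lt hl hr).1 hsin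
  rw [bsMat_zero, mul_one] at h
  exact ⟨Matrix.diagonal_injective h, rfl⟩

theorem eq_of_bsMat_mul_diagonal_mul_bsMat_eq (hd' : d' 0 ≠ 0)
    (haa' : |a - a'| < π / 2) (htt' : |t - t'| < π)
    (ha : d 0 ^ 2 = d 1 ^ 2 → a = 0) (ha' : d' 0 ^ 2 = d' 1 ^ 2 → a' = 0)
    (h : bsMat a * Matrix.diagonal d * bsMat t = bsMat a' * Matrix.diagonal d' * bsMat t') :
    a = a' ∧ d = d' ∧ t = t' := by
  obtain rfl : a = a' := by
    by_contra h_ne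
    have ha_zero := ha (sq_eq_sq_of_bsMat_mul_diagonal_mul_bsMat_eq h_ne haa' h)
    have ha'_zero := ha' (sq_eq_sq_of_bsMat_mul_diagonal_mul_bsMat_eq (Ne.symm h_ne)
      (abs_sub_comm a a' ▸ haa') h.symm)
    exact h_ne (ha_zero.trans ha'_zero.symm)
  have h_diag : Matrix.diagonal d = Matrix.diagonal d' * bsMat (t' - t) := by
    simpa only [sub_self, bsMat_zero, one_mul] using bsMat_sub_mul_diagonal_eq h
  obtain ⟨hdd', htt'_zero⟩ :=
    eq_and_eq_of_diagonal_eq_diagonal_mul_bsMat hd' (abs_sub_comm t t' ▸ htt') h_diag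
  exact ⟨rfl, hdd', (sub_eq_zero.1 htt'_zero).symm⟩

end Uniqueness

lemma exists_mem_Ico_circleExp_eq (z : Circle) : ∃ x ∈ Set.Ico 0 (2 * π), Circle.exp x = z := by
  obtain ⟨x, hx, h⟩ := Circle.periodic_exp.exists_mem_Ico₀ two_pi_pos (arg z)
  exact ⟨x, hx, by rw [← h, Circle.exp_arg]⟩

lemma circleExp_sq_eq_sq_iff {x y : ℝ} :
    (Circle.exp x : ℂ) ^ 2 = (Circle.exp y : ℂ) ^ 2 ↔ ∃ m : ℤ, x - y = m * π := by
  rw [pow_two, pow_two, ← Circle.coe_mul, ← Circle.coe_mul, Circle.coe_inj, ← Circle.exp_add,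
    ← Circle.exp_add, Circle.exp_eq_exp]
  refine exists_congr fun m ↦ ⟨fun h ↦ ?_, fun h ↦ ?_⟩ <;> linarith

lemma ite_exp_eq_circleExp (x y : ℝ) :
    (fun i : Fin 2 ↦ if i = 0 then Complex.exp (I * x) else Complex.exp (I * y)) =
      fun i ↦ (![Circle.exp x, Circle.exp y] i : ℂ) := by
  ext i
  fin_cases i <;> simp [mul_comm]

theorem E2_lhs_exists_unique (U : Matrix.unitaryGroup (Fin 2) ℂ) :
    ∃! α : ℝ × ℝ × ℝ × ℝ,
      α.1 ∈ Set.Ico 0 (2 * π) ∧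
      α.2.1 ∈ Set.Ico 0 (π / 2) ∧
      α.2.2.1 ∈ Set.Ico 0 (2 * π) ∧
      α.2.2.2 ∈ Set.Ico 0 π ∧
      ((∃ m : ℤ, α.1 - α.2.2.1 = m * π) → α.2.1 = 0) ∧
      (U : Matrix (Fin 2) (Fin 2) ℂ) =
        bsMat α.2.1 *
          Matrix.diagonal (fun i => if i = 0 then Complex.exp (Complex.I * α.1)
            else Complex.exp (Complex.I * α.2.2.1)) *
          bsMat α.2.2.2 := by
  simp only [← circleExp_sq_eq_sq_iff, ite_exp_eq_circleExp]
  obtain ⟨a, ha, d, t, ht, ha_zero, hU⟩ := exists_eq_bsMat_mul_diagonal_mul_bsMat U.2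
  obtain ⟨x, hx, hxd⟩ := exists_mem_Ico_circleExp_eq (d 0)
  obtain ⟨y, hy, hyd⟩ := exists_mem_Ico_circleExp_eq (d 1)
  obtain rfl : d = ![Circle.exp x, Circle.exp y] :=
    funext (Fin.forall_fin_two.2 ⟨hxd.symm, hyd.symm⟩)
  refine ⟨(x, a, y, t), ⟨hx, ha, hy, ht, ha_zero, hU⟩, ?_⟩
  rintro ⟨x', a', y', t'⟩ ⟨hx', ha', hy', ht', ha'_zero, hU'⟩
  obtain ⟨rfl, hd, rfl⟩ := eq_of_bsMat_mul_diagonal_mul_bsMat_eq (Circle.coe_ne_zero _)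
    (abs_sub_lt_of_nonneg_of_lt ha'.1 ha'.2 ha.1 ha.2)
    (abs_sub_lt_of_nonneg_of_lt ht'.1 ht'.2 ht.1 ht.2)
    ha'_zero ha_zero (hU'.symm.trans hU)
  obtain rfl : x' = x :=
    Circle.exp_injOn_Ico (sub_zero _).le hx' hx (Circle.coe_injective (congrFun hd 0))
  obtain rfl : y' = y :=
    Circle.exp_injOn_Ico (sub_zero _).le hy' hy (Circle.coe_injective (congrFun hd 1))
  rfl
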